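/- arXiv:1810.05498 — 5 statements merged into one kernel-verified Lean document; each statement's English description precedes it below -/
import Mathlib

section
/- Let E be a lattice effect algebra and define x·y := ((x'∧y)⊕y')' for all x,y ∈ E. Then for all a, b ∈ E: a ≤ b (in the induced order) if and only if a·b' = 0. -/
/-- An effect algebra: a partial algebra (E;⊕,',0,1). The partial operation ⊕ is
modeled by a definedness predicate `D` together with a total function `add` whose
value is only meaningful on defined pairs. -/
structure EffectAlgebra (E : Type*) where
  /-- definedness of `x ⊕ y` -/
  D : E → E → Prop
  /-- the value of `x ⊕ y` (meaningful only when `D x y`) -/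
  add : E → E → E
  zero : E
  one : E
  /-- the complement `x'` -/
  compl : E → E
  /-- (E1) commutativity -/
  E1 : ∀ x y, D x y → D y x ∧ add x y = add y x
  /-- (E2) associativity -/
  E2 : ∀ x y z, D x y → D (add x y) z →
    D y z ∧ D x (add y z) ∧ add (add x y) z = add x (add y z)
  /-- (E3) existence of the complement -/
  E3a : ∀ x, D x (compl x)
  E3b : ∀ x, add x (compl x) = one
  /-- (E3) uniqueness of the complement -/
  E3c : ∀ x y, D x y → add x y = one → y = compl x
  /-- (E4) -/
  E4 : ∀ x, D x one → x = zero

/-- The induced order of an effect algebra: `a ≤ b` iff `a ⊕ c = b` for some `c`. -/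
def EffectAlgebra.le {E : Type*} (A : EffectAlgebra E) (a b : E) : Prop :=
  ∃ c, A.D a c ∧ A.add a c = b

/-- A lattice effect algebra: an effect algebra whose induced order is a lattice,
with meet `inf` and join `sup`. -/
structure LatticeEffectAlgebra (E : Type*) extends EffectAlgebra E where
  inf : E → E → E
  sup : E → E → E
  inf_le_left : ∀ a b, toEffectAlgebra.le (inf a b) a
  inf_le_right : ∀ a b, toEffectAlgebra.le (inf a b) b
  le_inf : ∀ a b c, toEffectAlgebra.le c a → toEffectAlgebra.le c b →
    toEffectAlgebra.le c (inf a b)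
  le_sup_left : ∀ a b, toEffectAlgebra.le a (sup a b)
  le_sup_right : ∀ a b, toEffectAlgebra.le b (sup a b)
  sup_le : ∀ a b c, toEffectAlgebra.le a c → toEffectAlgebra.le b c →
    toEffectAlgebra.le (sup a b) c

/-- The total operation `x·y := ((x'∧y)⊕y')'` on a lattice effect algebra
(well defined since `x'∧y ≤ y`). -/
def LatticeEffectAlgebra.prod {E : Type*} (A : LatticeEffectAlgebra E) (x y : E) : E :=
  A.compl (A.add (A.inf (A.compl x) y) (A.compl y))

/-!
Complementation is an order-reversing involution, so `a ≤ b` means `b' ≤ a'`, that is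
`a' ∧ b' = b'`. By uniqueness of complements this is `(a' ∧ b') ⊕ b = 1`, and taking complements
turns it into `a·b' = 0`.
-/

namespace EffectAlgebra

variable {E : Type*} (A : EffectAlgebra E) {x y : E}

theorem D_comm : A.D x y ↔ A.D y x :=
  ⟨fun h => (A.E1 x y h).1, fun h => (A.E1 y x h).1⟩

protected theorem add_comm (h : A.D x y) : A.add x y = A.add y x :=
  (A.E1 x y h).2

theorem compl_D_self (x : E) : A.D (A.compl x) x :=
  A.D_comm.mp (A.E3a x)

theorem compl_add_self (x : E) : A.add (A.compl x) x = A.one := by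
  rw [A.add_comm (A.compl_D_self x), A.E3b]

protected theorem compl_compl (x : E) : A.compl (A.compl x) = x :=
  (A.E3c _ _ (A.compl_D_self x) (A.compl_add_self x)).symm

theorem compl_one : A.compl A.one = A.zero :=
  A.E4 _ (A.compl_D_self A.one)

theorem compl_eq_zero_iff : A.compl x = A.zero ↔ x = A.one := by
  rw [← A.compl_one]
  exact (Function.Involutive.injective A.compl_compl).eq_iff

theorem add_eq_one_iff (h : A.D x y) : A.add x y = A.one ↔ x = A.compl y := by
  constructor
  · intro hxy
    exact A.E3c y x (A.D_comm.mp h) (A.add_comm h ▸ hxy)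
  · rintro rfl
    exact A.compl_add_self y

protected theorem add_zero (x : E) : A.add x A.zero = x := by
  have one_D_zero : A.D A.one A.zero := A.compl_one ▸ A.E3a A.one
  have one_add_zero : A.add A.one A.zero = A.one := A.compl_one ▸ A.E3b A.one
  obtain ⟨-, hD, hassoc⟩ :=
    A.E2 (A.compl x) x A.zero (A.compl_D_self x) ((A.compl_add_self x).symm ▸ one_D_zero)
  have hsum : A.add (A.compl x) (A.add x A.zero) = A.one := by
    rw [← hassoc, A.compl_add_self, one_add_zero]
  rw [A.E3c _ _ hD hsum, A.compl_compl]

theorem le_iff_D_compl : A.le x y ↔ A.D x (A.compl y) := by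
  constructor
  · rintro ⟨c, hxc, rfl⟩
    have hcx : A.D (A.add c x) (A.compl (A.add x c)) := A.add_comm hxc ▸ A.E3a (A.add x c)
    exact (A.E2 c x _ (A.D_comm.mp hxc) hcx).1
  · intro h
    -- The difference `y ⊖ x` is `(y' ⊕ x)'`.
    have hyx : A.D (A.compl y) x := A.D_comm.mp h
    obtain ⟨hD, hD', hassoc⟩ := A.E2 _ _ _ hyx (A.E3a (A.add (A.compl y) x))
    refine ⟨A.compl (A.add (A.compl y) x), hD, ?_⟩
    rw [A.E3c _ _ hD' (hassoc ▸ A.E3b _), A.compl_compl]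

theorem compl_le_compl_iff : A.le (A.compl x) (A.compl y) ↔ A.le y x := by
  rw [A.le_iff_D_compl, A.le_iff_D_compl, A.compl_compl, A.D_comm]

protected theorem le_refl (x : E) : A.le x x :=
  A.le_iff_D_compl.mpr (A.E3a x)

variable {A}

protected theorem le_antisymm (hxy : A.le x y) (hyx : A.le y x) : x = y := by
  obtain ⟨c, hxc, rfl⟩ := hxy
  have hD : A.D (A.add c x) (A.compl x) := A.add_comm hxc ▸ A.le_iff_D_compl.mp hyx
  have c_D_one : A.D c A.one := A.E3b x ▸ (A.E2 c x _ (A.D_comm.mp hxc) hD).2.1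
  rw [A.E4 c c_D_one, A.add_zero]

end EffectAlgebra

theorem le_iff_prod_compl_eq_zero_general {E : Type*} (A : EffectAlgebra E) {a b m : E}
    (hma : A.le m (A.compl a)) (hmb : A.le m (A.compl b))
    (hm : ∀ c, A.le c (A.compl a) → A.le c (A.compl b) → A.le c m) :
    A.le a b ↔ A.compl (A.add m b) = A.zero := by
  have hD : A.D m b := A.compl_compl b ▸ A.le_iff_D_compl.mp hmb
  calc A.le a b
    _ ↔ A.le (A.compl b) (A.compl a) := A.compl_le_compl_iff.symm
    _ ↔ m = A.compl b :=
      ⟨fun h => EffectAlgebra.le_antisymm hmb (hm _ h (A.le_refl _)), fun h => h ▸ hma⟩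
    _ ↔ A.add m b = A.one := (A.add_eq_one_iff hD).symm
    _ ↔ A.compl (A.add m b) = A.zero := A.compl_eq_zero_iff.symm

/-- In a lattice effect algebra with `x·y := ((x'∧y)⊕y')'`, one has
`a ≤ b` (in the induced order) iff `a·b' = 0`. -/
theorem le_iff_prod_compl_eq_zero {E : Type*} (A : LatticeEffectAlgebra E) (a b : E) :
    A.toEffectAlgebra.le a b ↔ A.prod a (A.compl b) = A.zero := by
  rw [LatticeEffectAlgebra.prod, A.compl_compl]
  exact le_iff_prod_compl_eq_zero_general A.toEffectAlgebra
    (A.inf_le_left _ _) (A.inf_le_right _ _) (A.le_inf _ _)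
end

section
/- Let R = (R;·,',0,1) be an effect groupoid and let a, b ∈ R. If a·b = 0, then b·a = 0 and a'·b' = b'·a'. -/
/-- An effect groupoid: an algebra (R;·,',0,1) of type (2,1,0,0) satisfying
(NG0)–(NG8). -/
structure EffectGroupoid (R : Type*) where
  mul : R → R → R
  compl : R → R
  zero : R
  one : R
  /-- (NG0) -/
  ng0l : ∀ x, mul one x = x
  ng0r : ∀ x, mul x one = x
  /-- (NG1) -/
  ng1 : ∀ x, compl (compl x) = x
  /-- (NG2) -/
  ng2l : ∀ x, mul zero x = zero
  ng2r : ∀ x, mul x zero = zero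
  /-- (NG3) -/
  ng3 : compl zero = one
  /-- (NG4) -/
  ng4l : ∀ x y, mul x (mul y (compl x)) = zero
  ng4r : ∀ x y, mul (mul y (compl x)) x = zero
  /-- (NG5) -/
  ng5 : ∀ x y, mul x y =
    mul y (compl (mul (compl (mul (compl y) (compl x))) (compl x)))
  /-- (NG6) -/
  ng6a : ∀ x y, mul x (compl (mul (compl y) x)) = mul (compl (mul (compl y) x)) x
  ng6b : ∀ x y, mul (compl (mul (compl y) x)) x = mul (compl (mul (compl x) y)) y
  /-- (NG7) -/
  ng7 : ∀ x y z,
    mul (compl (mul (compl (mul x (compl y))) (compl y))) z =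
    compl (mul (compl (mul (mul x z) (compl (mul y z)))) (compl (mul y z)))
  /-- (NG8) -/
  ng8 : ∀ x y z, mul (compl x) (compl y) = zero →
    mul (compl (mul x y)) (compl z) = zero →
    mul (compl y) (compl z) = zero ∧
    mul (compl x) (compl (mul y z)) = zero ∧
    mul (mul x y) z = mul x (mul y z)

/-!
Condition (NG6) makes the meet `x ∧ y = (y'·x)'·x` symmetric. If `a·b = 0`, then `b ∧ a' = b`,
so `b = a' ∧ b` is a left multiple of `a'`, which (NG4) turns into `b·a = 0`. Condition (NG5) says
`x·y = y·(x' ∧ y)'`; for `x = a'` and `y = b'` the meet is `a ∧ b'`, which is `a` because `b·a = 0`.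
-/

namespace EffectGroupoid

variable {R : Type*} (G : EffectGroupoid R) {x y : R}

/-- The meet `x ∧ y = (y'·x)'·x`: the term which, with `·` read as the Łukasiewicz conjunction
of an MV-algebra, expresses the lattice meet. -/
def inf (x y : R) : R :=
  G.mul (G.compl (G.mul (G.compl y) x)) x

theorem inf_comm (x y : R) : G.inf x y = G.inf y x :=
  G.ng6b x y

theorem inf_eq_left (h : G.mul (G.compl y) x = G.zero) : G.inf x y = x := by
  rw [inf, h, G.ng3, G.ng0l]

theorem inf_compl_left_mul (x y : R) : G.mul (G.inf (G.compl x) y) x = G.zero :=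
  G.ng4r x _

theorem mul_eq_mul_compl_inf (x y : R) :
    G.mul x y = G.mul y (G.compl (G.inf (G.compl x) y)) :=
  G.ng5 x y

theorem mul_eq_zero_swap (h : G.mul x y = G.zero) : G.mul y x = G.zero := by
  have inf_eq : G.inf y (G.compl x) = y := G.inf_eq_left (by rwa [G.ng1])
  calc
    G.mul y x = G.mul (G.inf (G.compl x) y) x := by rw [G.inf_comm, inf_eq]
    _ = G.zero := G.inf_compl_left_mul x y

theorem mul_comm_of_compl_mul_compl_eq_zero (h : G.mul (G.compl y) (G.compl x) = G.zero) :
    G.mul x y = G.mul y x := by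
  rw [G.mul_eq_mul_compl_inf, G.inf_eq_left h, G.ng1]

end EffectGroupoid

/-- In an effect groupoid, if `a·b = 0` then `b·a = 0` and `a'·b' = b'·a'`. -/
theorem mul_eq_zero_symm {R : Type*} (G : EffectGroupoid R) (a b : R)
    (h : G.mul a b = G.zero) :
    G.mul b a = G.zero ∧
    G.mul (G.compl a) (G.compl b) = G.mul (G.compl b) (G.compl a) := by
  have hba : G.mul b a = G.zero := G.mul_eq_zero_swap h
  exact ⟨hba, G.mul_comm_of_compl_mul_compl_eq_zero (by rwa [G.ng1, G.ng1])⟩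
end

section
/- Let R = (R;·,',0,1) be an effect groupoid and define the relation a ≤ b iff a·b' = 0. Then for all a, b ∈ R the element (a'·b)'·b is the greatest lower bound of a and b with respect to ≤: (a'·b)'·b ≤ a, (a'·b)'·b ≤ b, and for every x ∈ R with x ≤ a and x ≤ b one has x ≤ (a'·b)'·b. -/
/-!
Vanishing products commute, so `x ≤ a` also reads `a' · x = 0`. Right multiplication preserves the
join `a ∨ b = ((a · b')' · b')'`, which is dual to `a ∧ b = (a' · b)' · b`; hence if `x` lies below
`a` and `b`, then `(a ∧ b)' · x = (a' · x) ∨ (b' · x) = 0`.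
-/

/-- A groupoid with an involution `xᶜ`, written with Mathlib's notation classes, in which right
multiplications preserve the join `((x · y')' · y')'`. It isolates the identities of an effect
groupoid that make `(a' · b)' · b` a meet: the fields are, in order, the left unit law of (NG0),
(NG1), (NG3), the second equalities of (NG4) and (NG6), and (NG7). -/
class RightDistribGroupoid (R : Type*) extends Mul R, Compl R, Zero R, One R where
  protected one_mul : ∀ x : R, 1 * x = x
  protected compl_compl : ∀ x : R, xᶜᶜ = x
  protected compl_zero : (0 : R)ᶜ = 1
  mul_compl_mul_self : ∀ x y : R, y * xᶜ * x = 0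
  compl_compl_mul_mul_comm : ∀ x y : R, (yᶜ * x)ᶜ * x = (xᶜ * y)ᶜ * y
  compl_compl_mul_compl_mul : ∀ x y z : R,
    ((x * yᶜ)ᶜ * yᶜ)ᶜ * z = ((x * z * (y * z)ᶜ)ᶜ * (y * z)ᶜ)ᶜ

namespace RightDistribGroupoid

variable {R : Type*} [RightDistribGroupoid R]

/-- The relation `a · b' = 0`, written `a ≤ b`. -/
instance : LE R := ⟨fun a b => a * bᶜ = 0⟩

/-- The candidate meet `(a' · b)' · b`, written `a ⊓ b`. -/
instance : Min R := ⟨fun a b => (aᶜ * b)ᶜ * b⟩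

/-- The De Morgan dual `((a · b')' · b')'` of the meet, written `a ⊔ b`. -/
instance : Max R := ⟨fun a b => ((a * bᶜ)ᶜ * bᶜ)ᶜ⟩

protected theorem le_def {a b : R} : a ≤ b ↔ a * bᶜ = 0 := Iff.rfl

protected theorem inf_def (a b : R) : a ⊓ b = (aᶜ * b)ᶜ * b := rfl

protected theorem sup_def (a b : R) : a ⊔ b = ((a * bᶜ)ᶜ * bᶜ)ᶜ := rfl

protected theorem compl_one : (1 : R)ᶜ = 0 := by
  rw [← RightDistribGroupoid.compl_zero, RightDistribGroupoid.compl_compl]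

protected theorem inf_comm (a b : R) : a ⊓ b = b ⊓ a :=
  compl_compl_mul_mul_comm b a

protected theorem compl_inf (a b : R) : (a ⊓ b)ᶜ = aᶜ ⊔ bᶜ := by
  rw [RightDistribGroupoid.inf_def, RightDistribGroupoid.sup_def, RightDistribGroupoid.compl_compl]

protected theorem sup_mul (a b c : R) : (a ⊔ b) * c = a * c ⊔ b * c :=
  compl_compl_mul_compl_mul a b c

theorem mul_eq_zero_symm {a b : R} (h : a * b = 0) : b * a = 0 := by
  have hb : (bᶜ * aᶜ)ᶜ * aᶜ = b := by
    rw [compl_compl_mul_mul_comm, RightDistribGroupoid.compl_compl, h,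
      RightDistribGroupoid.compl_zero, RightDistribGroupoid.one_mul]
  rw [← hb]
  exact mul_compl_mul_self a _

theorem le_iff_compl_mul_eq_zero {a b : R} : a ≤ b ↔ bᶜ * a = 0 :=
  ⟨mul_eq_zero_symm, mul_eq_zero_symm⟩

theorem mul_le_right (a b : R) : a * b ≤ b := by
  simpa only [RightDistribGroupoid.le_def, RightDistribGroupoid.compl_compl]
    using mul_compl_mul_self bᶜ a

theorem zero_sup_zero : (0 : R) ⊔ 0 = 0 := by
  have zero_mul_one : (0 : R) * 1 = 0 := by
    simpa only [RightDistribGroupoid.one_mul, RightDistribGroupoid.compl_one]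
      using mul_compl_mul_self (1 : R) 1
  simp only [RightDistribGroupoid.sup_def, RightDistribGroupoid.compl_zero, zero_mul_one,
    RightDistribGroupoid.one_mul, RightDistribGroupoid.compl_one]

protected theorem inf_le_right (a b : R) : a ⊓ b ≤ b :=
  mul_le_right _ b

protected theorem inf_le_left (a b : R) : a ⊓ b ≤ a :=
  RightDistribGroupoid.inf_comm a b ▸ RightDistribGroupoid.inf_le_right b a

protected theorem le_inf {a b c : R} (ha : c ≤ a) (hb : c ≤ b) : c ≤ a ⊓ b := by
  rw [le_iff_compl_mul_eq_zero] at ha hb ⊢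
  calc (a ⊓ b)ᶜ * c = (aᶜ ⊔ bᶜ) * c := by rw [RightDistribGroupoid.compl_inf]
    _ = aᶜ * c ⊔ bᶜ * c := RightDistribGroupoid.sup_mul _ _ _
    _ = 0 ⊔ 0 := by rw [ha, hb]
    _ = 0 := zero_sup_zero

end RightDistribGroupoid

/-- The right-distributive groupoid underlying an effect groupoid. -/
abbrev EffectGroupoid.toRightDistribGroupoid {R : Type*} (G : EffectGroupoid R) :
    RightDistribGroupoid R where
  mul := G.mul
  compl := G.compl
  zero := G.zero
  one := G.one
  one_mul := G.ng0l
  compl_compl := G.ng1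
  compl_zero := G.ng3
  mul_compl_mul_self := G.ng4r
  compl_compl_mul_mul_comm := G.ng6b
  compl_compl_mul_compl_mul := G.ng7

theorem inf_is_glb_general {R : Type*} [RightDistribGroupoid R] (a b : R) :
    a ⊓ b ≤ a ∧ a ⊓ b ≤ b ∧ ∀ x : R, x ≤ a → x ≤ b → x ≤ a ⊓ b :=
  ⟨RightDistribGroupoid.inf_le_left a b, RightDistribGroupoid.inf_le_right a b,
    fun _ => RightDistribGroupoid.le_inf⟩

/-- In an effect groupoid with the relation `a ≤ b` iff `a·b' = 0`, the element
`(a'·b)'·b` is the greatest lower bound of `a` and `b`. -/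
theorem inf_is_glb {R : Type*} (G : EffectGroupoid R) (a b : R) :
    G.mul (G.mul (G.compl (G.mul (G.compl a) b)) b) (G.compl a) = G.zero ∧
    G.mul (G.mul (G.compl (G.mul (G.compl a) b)) b) (G.compl b) = G.zero ∧
    ∀ x : R, G.mul x (G.compl a) = G.zero → G.mul x (G.compl b) = G.zero →
      G.mul x (G.compl (G.mul (G.compl (G.mul (G.compl a) b)) b)) = G.zero := by
  let _ := G.toRightDistribGroupoid
  exact inf_is_glb_general a b
end

section
/- Let R = (R;·,',0,1) be an effect groupoid and define the partial operation x⊕y := (x'·y')' whenever x·y = 0 (undefined otherwise). Then 𝔼(R) := (R;⊕,',0,1) is a lattice effect algebra: it satisfies the effect algebra axioms (E1)–(E4), and its induced order (a ≤ b iff a⊕c = b for some c, equivalently a·b' = 0) is a lattice order. -/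
/-! In terms of `x ∨ y = ((x·y')'·y')'`, `x ∧ y = (x'·y)'·y` and `x ⊕ y = (x'·y')'`, axiom (NG6)
contains the commutativity of `∧`, (NG7) says that right multiplication preserves `∨`, which yields
the least upper bound property, and (NG8) is (E2). The one point that takes an argument is the
symmetry of `x·y = 0`: associating `(x ⊕ y) ⊕ (x ⊕ y)'` to the right gives `x ≤ x ∧ y' ≤ x`, so that
`(y·x) ⊕ x' = (y' ∧ x)' = x'`, and cancelling `x'` leaves `y·x = 0`. -/

namespace EffectGroupoid

variable {R : Type*} (G : EffectGroupoid R) {x y z : R}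

local infixl:70 "⬝" => G.mul
local postfix:max "′" => G.compl

/-- The sum `x ⊕ y = (x'·y')'` as a total operation; it is the sum of the effect algebra only on
pairs with `x·y = 0`. -/
def add (x y : R) : R := (x′⬝y′)′

/-- The induced order `x ≤ y` of the effect algebra, in the form `x·y' = 0`. -/
def Le (x y : R) : Prop := x⬝y′ = G.zero

/-- The join `x ∨ y = ((x·y')'·y')'` for the order `Le`. -/
def join (x y : R) : R := ((x⬝y′)′⬝y′)′

/-- The meet `x ∧ y = (x'·y)'·y` for the order `Le`. -/
def meet (x y : R) : R := (x′⬝y)′⬝y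

theorem compl_one : G.one′ = G.zero := by
  rw [← G.ng3, G.ng1]

theorem mul_compl_self (x : R) : x⬝x′ = G.zero := by
  simpa only [G.ng0l] using G.ng4l x G.one

theorem le_compl_iff : G.Le x y′ ↔ x⬝y = G.zero := by
  rw [Le, G.ng1]

theorem compl_add (x y : R) : (G.add x y)′ = x′⬝y′ :=
  G.ng1 _

theorem compl_join (x y : R) : (G.join x y)′ = G.meet x′ y′ := by
  rw [join, meet, G.ng1, G.ng1]

theorem compl_meet (x y : R) : (G.meet x y)′ = G.join x′ y′ := by
  rw [← G.ng1 (G.join x′ y′), compl_join, G.ng1, G.ng1]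

theorem meet_comm (x y : R) : G.meet x y = G.meet y x :=
  G.ng6b y x

theorem join_comm (x y : R) : G.join x y = G.join y x := by
  rw [← G.ng1 (G.join x y), compl_join, meet_comm, ← compl_join, G.ng1]

theorem join_eq_right (h : G.Le x y) : G.join x y = y := by
  rw [join, h, G.ng3, G.ng0l, G.ng1]

variable {G} in
theorem Le.antisymm (hxy : G.Le x y) (hyx : G.Le y x) : x = y := by
  rw [← G.join_eq_right hxy, G.join_comm, G.join_eq_right hyx]

theorem meet_le_right (x y : R) : G.Le (G.meet x y) y := by
  simpa only [Le, meet, G.ng1] using G.ng4r y′ (x′⬝y)′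

theorem meet_le_left (x y : R) : G.Le (G.meet x y) x :=
  G.meet_comm x y ▸ G.meet_le_right y x

theorem le_join_right (x y : R) : G.Le y (G.join x y) := by
  rw [Le, join, G.ng1]
  exact G.ng4l y _

theorem le_join_left (x y : R) : G.Le x (G.join x y) :=
  G.join_comm x y ▸ G.le_join_right y x

theorem join_mul (x y z : R) : (G.join x y)⬝z = G.join (x⬝z) (y⬝z) :=
  G.ng7 x y z

theorem join_le (hx : G.Le x z) (hy : G.Le y z) : G.Le (G.join x y) z := by
  rw [Le, join_mul, hx, hy]
  exact G.join_eq_right (G.mul_compl_self G.zero)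

theorem add_assoc (hxy : x⬝y = G.zero) (hxyz : (G.add x y)⬝z = G.zero) :
    y⬝z = G.zero ∧ x⬝(G.add y z) = G.zero ∧ G.add (G.add x y) z = G.add x (G.add y z) := by
  have h := G.ng8 x′ y′ z′
  simp only [G.ng1] at h
  obtain ⟨hyz, hx_yz, hassoc⟩ := h hxy hxyz
  refine ⟨hyz, hx_yz, ?_⟩
  rw [add, compl_add, hassoc, ← compl_add, ← add]

theorem add_compl_self (x : R) : G.add x x′ = G.one := by
  rw [add, G.mul_compl_self, G.ng3]

theorem eq_zero_of_add_eq_right (hxy : x⬝y = G.zero) (h : G.add x y = y) : x = G.zero := by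
  have hx : x⬝(G.add y y′) = G.zero :=
    (G.add_assoc hxy (by rw [h, mul_compl_self])).2.1
  rwa [add_compl_self, G.ng0r] at hx

theorem le_meet_compl_of_mul_eq_zero (h : x⬝y = G.zero) : G.Le x (G.meet x y′) := by
  have hx : x⬝(G.add y (G.add x y)′) = G.zero := (G.add_assoc h (G.mul_compl_self _)).2.1
  rwa [add, G.ng1, add, G.ng6a] at hx

theorem mul_eq_zero_symm (h : x⬝y = G.zero) : y⬝x = G.zero := by
  have hmeet : G.meet x y′ = x :=
    (G.meet_le_left x y′).antisymm (G.le_meet_compl_of_mul_eq_zero h)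
  have horth : (y⬝x)⬝x′ = G.zero := by
    simpa only [G.ng1] using G.ng4r x′ y
  have hadd : G.add (y⬝x) x′ = x′ := by
    rw [meet_comm, meet, G.ng1] at hmeet
    rw [add, G.ng1, hmeet]
  exact G.eq_zero_of_add_eq_right horth hadd

variable {G} in
theorem Le.compl (h : G.Le x y) : G.Le y′ x′ :=
  G.le_compl_iff.2 (G.mul_eq_zero_symm h)

theorem le_meet (hx : G.Le z x) (hy : G.Le z y) : G.Le z (G.meet x y) := by
  simpa only [← compl_meet, G.ng1] using (G.join_le hx.compl hy.compl).compl

theorem mul_eq_mul_join (x y : R) : x⬝y = y⬝(G.join y′ x) :=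
  G.ng5 x y

theorem add_comm (h : x⬝y = G.zero) : G.add x y = G.add y x := by
  have hyx : G.Le y x′ := G.le_compl_iff.2 (G.mul_eq_zero_symm h)
  rw [add, mul_eq_mul_join, G.ng1, G.join_eq_right hyx, ← add]

theorem le_add_right (h : x⬝y = G.zero) : G.Le x (G.add x y) := by
  rw [G.add_comm h, Le, compl_add]
  exact G.ng4l x y′

theorem add_mul_compl (x y : R) : G.add x (y⬝x′) = G.join x y := by
  rw [G.add_comm (G.ng4l x y), G.join_comm x y, add, join]

theorem le_iff_exists_add : G.Le x y ↔ ∃ c, x⬝c = G.zero ∧ G.add x c = y := by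
  refine ⟨fun h => ⟨y⬝x′, G.ng4l x y, ?_⟩, ?_⟩
  · rw [add_mul_compl, G.join_eq_right h]
  · rintro ⟨c, hc, rfl⟩
    exact G.le_add_right hc

theorem eq_compl_of_add_eq_one (hxy : x⬝y = G.zero) (h : G.add x y = G.one) : y = x′ := by
  have hle : G.Le x′ y := by
    rw [Le, ← compl_add, h, compl_one]
  exact (G.le_compl_iff.2 (G.mul_eq_zero_symm hxy)).antisymm hle

/-- The effect algebra `𝔼(R)`, where `x ⊕ y = (x'·y')'` is defined when `x·y = 0`. -/
def toEffectAlgebra : EffectAlgebra R where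
  D x y := x⬝y = G.zero
  add := G.add
  zero := G.zero
  one := G.one
  compl := G.compl
  E1 _ _ h := ⟨G.mul_eq_zero_symm h, G.add_comm h⟩
  E2 _ _ _ := G.add_assoc
  E3a := G.mul_compl_self
  E3b := G.add_compl_self
  E3c _ _ := G.eq_compl_of_add_eq_one
  E4 x h := by rwa [G.ng0r] at h

theorem toEffectAlgebra_le_iff (x y : R) : G.toEffectAlgebra.le x y ↔ G.Le x y :=
  G.le_iff_exists_add.symm

/-- The effect algebra `𝔼(R)` together with the lattice operations of its induced order. -/
def toLatticeEffectAlgebra : LatticeEffectAlgebra R where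
  toEffectAlgebra := G.toEffectAlgebra
  inf := G.meet
  sup := G.join
  inf_le_left x y := (G.toEffectAlgebra_le_iff _ _).2 (G.meet_le_left x y)
  inf_le_right x y := (G.toEffectAlgebra_le_iff _ _).2 (G.meet_le_right x y)
  le_inf x y z := by
    simpa only [toEffectAlgebra_le_iff] using G.le_meet
  le_sup_left x y := (G.toEffectAlgebra_le_iff _ _).2 (G.le_join_left x y)
  le_sup_right x y := (G.toEffectAlgebra_le_iff _ _).2 (G.le_join_right x y)
  sup_le x y z := by
    simpa only [toEffectAlgebra_le_iff] using G.join_le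

end EffectGroupoid

/-- For an effect groupoid `R` with the partial operation `x⊕y := (x'·y')'` defined
whenever `x·y = 0`, the structure `𝔼(R) := (R;⊕,',0,1)` is a lattice effect algebra
whose induced order coincides with `a ≤ b` iff `a·b' = 0`. -/
theorem effectGroupoid_to_latticeEffectAlgebra {R : Type*} (G : EffectGroupoid R) :
    ∃ A : LatticeEffectAlgebra R,
      (∀ a b, A.D a b ↔ G.mul a b = G.zero) ∧
      (∀ a b, G.mul a b = G.zero →
        A.add a b = G.compl (G.mul (G.compl a) (G.compl b))) ∧
      A.zero = G.zero ∧ A.one = G.one ∧ A.compl = G.compl ∧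
      (∀ a b, A.toEffectAlgebra.le a b ↔ G.mul a (G.compl b) = G.zero) := by
  exact ⟨G.toLatticeEffectAlgebra, fun _ _ => Iff.rfl, fun _ _ _ => rfl, rfl, rfl, rfl,
    G.toEffectAlgebra_le_iff⟩
end

section
/- (Completeness) The groupoid-based logic L_LEA for lattice effect algebras is complete with respect to the class of effect groupoids: for all formulas φ, ψ, if for every effect groupoid R = (R;·,',0,1) and every valuation v of the propositional variables in R one has ⟦φ⟧ᵥ ≤ ⟦ψ⟧ᵥ (where a ≤ b means a·b' = 0), then the sequent φ ⊢ ψ is derivable in L_LEA. Equivalently, the Lindenbaum–Tarski quotient of the set of formulas by the relation φ ≡ ψ iff (φ ⊢ ψ and ψ ⊢ φ are derivable), with operations [φ]·[ψ] := [φ·ψ], [φ]' := [¬φ], 0 := [⊥], 1 := [⊤], is well defined and is an effect groupoid. -/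
/-- Formulas of the groupoid-based logic L_LEA over propositional variables `V`. -/
inductive Fml (V : Type*) : Type _ where
  | var : V → Fml V
  | mul : Fml V → Fml V → Fml V
  | neg : Fml V → Fml V
  | bot : Fml V
  | top : Fml V

/-- The abbreviation χ(φ,ψ) := ¬(¬(φ·¬ψ)·¬ψ) used in the rule (mds). -/
def Fml.chi {V : Type*} (φ ψ : Fml V) : Fml V :=
  .neg (.mul (.neg (.mul φ (.neg ψ))) (.neg ψ))

/-- Derivable sequents `φ ⊢ ψ` of the sequent calculus L_LEA. -/
inductive Der {V : Type*} : Fml V → Fml V → Prop where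
  | negr  : ∀ φ ψ, Der φ (.neg ψ) → Der ψ (.neg φ)
  | dn1   : ∀ φ, Der (.neg (.neg φ)) φ
  | dn2   : ∀ φ, Der φ (.neg (.neg φ))
  | itm1  : ∀ φ ψ μ, Der φ ψ → Der ψ φ → Der (.mul φ μ) (.mul ψ μ)
  | itm2  : ∀ φ ψ μ, Der φ ψ → Der ψ φ → Der (.mul μ φ) (.mul μ ψ)
  | mbot  : ∀ φ ψ, Der (.mul φ (.neg ψ)) .bot → Der φ ψ
  | botm  : ∀ φ ψ, Der φ ψ → Der (.mul φ (.neg ψ)) .bot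
  | onel1 : ∀ φ, Der (.mul .top φ) φ
  | onel2 : ∀ φ, Der φ (.mul .top φ)
  | oner1 : ∀ φ, Der (.mul φ .top) φ
  | oner2 : ∀ φ, Der φ (.mul φ .top)
  | zerol1 : ∀ φ, Der (.mul .bot φ) .bot
  | zerol2 : ∀ φ, Der .bot (.mul .bot φ)
  | zeror1 : ∀ φ, Der (.mul φ .bot) .bot
  | zeror2 : ∀ φ, Der .bot (.mul φ .bot)
  | ol1  : ∀ φ ψ, Der .bot (.mul φ (.mul ψ (.neg φ)))
  | ol2  : ∀ φ ψ, Der (.mul φ (.mul ψ (.neg φ))) .bot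
  | or1  : ∀ φ ψ, Der .bot (.mul (.mul ψ (.neg φ)) φ)
  | or2  : ∀ φ ψ, Der (.mul (.mul ψ (.neg φ)) φ) .bot
  | cm1  : ∀ φ ψ, Der (.mul φ (.neg (.mul (.neg ψ) φ))) (.mul (.neg (.mul (.neg ψ) φ)) φ)
  | cm2  : ∀ φ ψ, Der (.mul (.neg (.mul (.neg ψ) φ)) φ) (.mul φ (.neg (.mul (.neg ψ) φ)))
  | mc1  : ∀ φ ψ, Der (.mul (.neg (.mul (.neg ψ) φ)) φ) (.mul (.neg (.mul (.neg φ) ψ)) ψ)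
  | mc2  : ∀ φ ψ, Der (.mul (.neg (.mul (.neg φ) ψ)) ψ) (.mul (.neg (.mul (.neg ψ) φ)) φ)
  | ocm1 : ∀ φ ψ, Der (.mul φ ψ) (.mul ψ (.neg (.mul (.neg (.mul (.neg ψ) (.neg φ))) (.neg φ))))
  | ocm2 : ∀ φ ψ, Der (.mul ψ (.neg (.mul (.neg (.mul (.neg ψ) (.neg φ))) (.neg φ)))) (.mul φ ψ)
  | mds1 : ∀ φ ψ μ, Der (.mul (Fml.chi φ ψ) μ) (Fml.chi (.mul φ μ) (.mul ψ μ))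
  | mds2 : ∀ φ ψ μ, Der (Fml.chi (.mul φ μ) (.mul ψ μ)) (.mul (Fml.chi φ ψ) μ)
  | cut  : ∀ φ ψ χ, Der φ ψ → Der ψ χ → Der φ χ
  | ass1 : ∀ φ ψ μ, Der (.neg φ) ψ → Der (.neg (.mul φ ψ)) μ → Der (.neg ψ) μ
  | ass2 : ∀ φ ψ μ, Der (.neg φ) ψ → Der (.neg (.mul φ ψ)) μ → Der (.neg φ) (.mul ψ μ)
  | ass3a : ∀ φ ψ μ, Der (.neg φ) ψ → Der (.neg (.mul φ ψ)) μ →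
      Der (.mul (.mul φ ψ) μ) (.mul φ (.mul ψ μ))
  | ass3b : ∀ φ ψ μ, Der (.neg φ) ψ → Der (.neg (.mul φ ψ)) μ →
      Der (.mul φ (.mul ψ μ)) (.mul (.mul φ ψ) μ)

/-- Interpretation of a formula in an effect groupoid under a valuation `v`. -/
def interp {V R : Type*} (G : EffectGroupoid R) (v : V → R) : Fml V → R
  | .var p => v p
  | .mul φ ψ => G.mul (interp G v φ) (interp G v ψ)
  | .neg φ => G.compl (interp G v φ)
  | .bot => G.zero
  | .top => G.one

/-!
The Lindenbaum–Tarski quotient is a universal model: the formula `φ` takes the value `[φ]` under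
the valuation `p ↦ [p]`, and by the rules (m-⊥) and (⊥-m) the inequality `[φ]·[ψ]' = 0` says exactly
that `φ ⊢ ψ`. The same equivalence turns the conditional law (NG8) into the rules (ass1)–(ass3).
-/

namespace Der

variable {V : Type*} {φ φ' ψ ψ' μ : Fml V}

theorem refl (φ : Fml V) : Der φ φ :=
  .cut _ _ _ (.dn2 φ) (.dn1 φ)

theorem trans (h : Der φ ψ) (k : Der ψ μ) : Der φ μ :=
  .cut _ _ _ h k

instance : IsPreorder (Fml V) Der where
  refl := Der.refl
  trans _ _ _ := Der.trans

theorem mul_neg_bot_iff : Der (.mul φ (.neg ψ)) .bot ↔ Der φ ψ :=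
  ⟨.mbot φ ψ, .botm φ ψ⟩

theorem mul_congr (h : Der φ φ') (h' : Der φ' φ) (k : Der ψ ψ') (k' : Der ψ' ψ) :
    Der (.mul φ ψ) (.mul φ' ψ') :=
  (Der.itm1 φ φ' ψ h h').trans (.itm2 ψ ψ' φ' k k')

theorem contrapose (h : Der φ ψ) : Der (.neg ψ) (.neg φ) :=
  .negr _ _ (h.trans (.dn2 ψ))

theorem of_bot (φ : Fml V) : Der .bot φ :=
  mul_neg_bot_iff.1 (.zerol1 _)

theorem neg_top_bot : Der (.neg .top : Fml V) .bot :=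
  (Der.onel2 _).trans (mul_neg_bot_iff.2 (.refl .top))

theorem to_top (φ : Fml V) : Der φ .top :=
  mul_neg_bot_iff.1 <| (Der.itm2 _ _ _ neg_top_bot (.of_bot _)).trans (.zeror1 φ)

theorem top_neg_bot : Der (.top : Fml V) (.neg .bot) :=
  .negr _ _ (.of_bot _)

end Der

/-- The Lindenbaum–Tarski quotient of the set of formulas by interderivability. -/
abbrev Lindenbaum (V : Type*) : Type _ :=
  Antisymmetrization (Fml V) Der

namespace Lindenbaum

variable {V : Type*} {φ ψ : Fml V}

/-- The class `[φ]` of a formula in the Lindenbaum–Tarski quotient. -/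
def mk (φ : Fml V) : Lindenbaum V :=
  toAntisymmetrization Der φ

theorem mk_eq_mk_iff : mk φ = mk ψ ↔ Der φ ψ ∧ Der ψ φ :=
  Quotient.eq

/-- The product `[φ]·[ψ] := [φ·ψ]` of classes of formulas. -/
def mul : Lindenbaum V → Lindenbaum V → Lindenbaum V :=
  Quotient.map₂ Fml.mul fun _ _ h _ _ k => ⟨.mul_congr h.1 h.2 k.1 k.2, .mul_congr h.2 h.1 k.2 k.1⟩

/-- The complement `[φ]' := [¬φ]` of a class of formulas. -/
def compl : Lindenbaum V → Lindenbaum V :=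
  Quotient.map Fml.neg fun _ _ h => ⟨h.2.contrapose, h.1.contrapose⟩

theorem mul_compl_eq_mk_bot_iff : mul (mk φ) (compl (mk ψ)) = mk .bot ↔ Der φ ψ :=
  calc mul (mk φ) (compl (mk ψ)) = mk .bot
    _ ↔ Der (.mul φ (.neg ψ)) .bot ∧ Der .bot (.mul φ (.neg ψ)) := mk_eq_mk_iff
    _ ↔ Der (.mul φ (.neg ψ)) .bot := and_iff_left (.of_bot _)
    _ ↔ Der φ ψ := Der.mul_neg_bot_iff

/-- The Lindenbaum–Tarski quotient as an effect groupoid, with `0 := [⊥]` and `1 := [⊤]`. -/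
def effectGroupoid (V : Type*) : EffectGroupoid (Lindenbaum V) where
  mul := mul
  compl := compl
  zero := mk .bot
  one := mk .top
  ng0l := by rintro ⟨φ⟩; exact mk_eq_mk_iff.2 ⟨.onel1 φ, .onel2 φ⟩
  ng0r := by rintro ⟨φ⟩; exact mk_eq_mk_iff.2 ⟨.oner1 φ, .oner2 φ⟩
  ng1 := by rintro ⟨φ⟩; exact mk_eq_mk_iff.2 ⟨.dn1 φ, .dn2 φ⟩
  ng2l := by rintro ⟨φ⟩; exact mk_eq_mk_iff.2 ⟨.zerol1 φ, .zerol2 φ⟩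
  ng2r := by rintro ⟨φ⟩; exact mk_eq_mk_iff.2 ⟨.zeror1 φ, .zeror2 φ⟩
  ng3 := mk_eq_mk_iff.2 ⟨.to_top _, .top_neg_bot⟩
  ng4l := by rintro ⟨φ⟩ ⟨ψ⟩; exact mk_eq_mk_iff.2 ⟨.ol2 φ ψ, .ol1 φ ψ⟩
  ng4r := by rintro ⟨φ⟩ ⟨ψ⟩; exact mk_eq_mk_iff.2 ⟨.or2 φ ψ, .or1 φ ψ⟩
  ng5 := by rintro ⟨φ⟩ ⟨ψ⟩; exact mk_eq_mk_iff.2 ⟨.ocm1 φ ψ, .ocm2 φ ψ⟩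
  ng6a := by rintro ⟨φ⟩ ⟨ψ⟩; exact mk_eq_mk_iff.2 ⟨.cm1 φ ψ, .cm2 φ ψ⟩
  ng6b := by rintro ⟨φ⟩ ⟨ψ⟩; exact mk_eq_mk_iff.2 ⟨.mc1 φ ψ, .mc2 φ ψ⟩
  ng7 := by rintro ⟨φ⟩ ⟨ψ⟩ ⟨μ⟩; exact mk_eq_mk_iff.2 ⟨.mds1 φ ψ μ, .mds2 φ ψ μ⟩
  ng8 := by
    rintro ⟨φ⟩ ⟨ψ⟩ ⟨μ⟩ h k
    have hφψ : Der (.neg φ) ψ := mul_compl_eq_mk_bot_iff.1 h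
    have hφψμ : Der (.neg (.mul φ ψ)) μ := mul_compl_eq_mk_bot_iff.1 k
    exact ⟨mul_compl_eq_mk_bot_iff.2 (.ass1 φ ψ μ hφψ hφψμ),
      mul_compl_eq_mk_bot_iff.2 (.ass2 φ ψ μ hφψ hφψμ),
      mk_eq_mk_iff.2 ⟨.ass3a φ ψ μ hφψ hφψμ, .ass3b φ ψ μ hφψ hφψμ⟩⟩

/-- The valuation `p ↦ [p]` in the Lindenbaum–Tarski quotient. -/
def canonicalValuation (V : Type*) (p : V) : Lindenbaum V :=
  mk (.var p)

theorem interp_canonicalValuation (φ : Fml V) :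
    interp (effectGroupoid V) (canonicalValuation V) φ = mk φ := by
  induction φ with
  | var p => rfl
  | mul φ ψ hφ hψ => exact congrArg₂ mul hφ hψ
  | neg φ hφ => exact congrArg compl hφ
  | bot => rfl
  | top => rfl

end Lindenbaum

open Lindenbaum in
theorem completeness_general {V : Type*} (φ ψ : Fml V)
    (h : (effectGroupoid V).mul (interp (effectGroupoid V) (canonicalValuation V) φ)
      ((effectGroupoid V).compl (interp (effectGroupoid V) (canonicalValuation V) ψ)) =
        (effectGroupoid V).zero) :
    Der φ ψ := by
  rw [interp_canonicalValuation, interp_canonicalValuation] at h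
  exact mul_compl_eq_mk_bot_iff.1 h

/-- (Completeness) If `⟦φ⟧ᵥ ≤ ⟦ψ⟧ᵥ` (i.e. `⟦φ⟧ᵥ·⟦ψ⟧ᵥ' = 0`) holds in every effect
groupoid `R` under every valuation `v`, then the sequent `φ ⊢ ψ` is derivable
in L_LEA. -/
theorem completeness {V : Type} (φ ψ : Fml V)
    (h : ∀ (R : Type) (G : EffectGroupoid R) (v : V → R),
      G.mul (interp G v φ) (G.compl (interp G v ψ)) = G.zero) :
    Der φ ψ :=
  completeness_general φ ψ (h _ _ _)
end
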